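/- Let α > -1/2. There exist positive constants c₁ and c₂ (depending only on α) such that for all t, λ ∈ ℝ one has c₁ · min{1, (λt)²} ≤ 1 − j_α(λt) ≤ c₂ · min{1, (λt)²}. -/

import Mathlib

open Real

/-- The normalized Bessel function of the first kind and order `α`:
`j_α(s) = Γ(α+1) · Σ_{n≥0} (−1)ⁿ (s/2)^{2n} / (n! Γ(n+α+1))`. -/
noncomputable def besselNorm (α : ℝ) (s : ℝ) : ℝ :=
  Real.Gamma (α + 1) *
    ∑' n : ℕ, (-1 : ℝ) ^ n * (s / 2) ^ (2 * n) / (n.factorial * Real.Gamma (n + α + 1))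

open MeasureTheory Set

namespace BesselNorm

/-- The Beta weight `u ^ (a - 1) (1 - u) ^ (b - 1)`. -/
noncomputable def betaWeight (a b u : ℝ) : ℝ := u ^ (a - 1) * (1 - u) ^ (b - 1)

lemma betaWeight_nonneg (a b : ℝ) {u : ℝ} (hu : u ∈ Ioc (0 : ℝ) 1) : 0 ≤ betaWeight a b u :=
  mul_nonneg (rpow_nonneg hu.1.le _) (rpow_nonneg (sub_nonneg.2 hu.2) _)

lemma pow_mul_betaWeight (a b : ℝ) (n : ℕ) {u : ℝ} (hu : 0 < u) :
    u ^ n * betaWeight a b u = betaWeight (n + a) b u := by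
  rw [betaWeight, betaWeight, ← mul_assoc, ← rpow_natCast, ← rpow_add hu, add_sub_assoc]

lemma ofReal_betaWeight (a b : ℝ) {u : ℝ} (hu : u ∈ Ioc (0 : ℝ) 1) :
    ((betaWeight a b u : ℝ) : ℂ) = (u : ℂ) ^ ((a : ℂ) - 1) * (1 - (u : ℂ)) ^ ((b : ℂ) - 1) := by
  rw [betaWeight, Complex.ofReal_mul, Complex.ofReal_cpow hu.1.le,
    Complex.ofReal_cpow (sub_nonneg.2 hu.2)]
  push_cast
  rfl

lemma integrableOn_betaWeight {a b : ℝ} (ha : 0 < a) (hb : 0 < b) :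
    IntegrableOn (betaWeight a b) (Ioc 0 1) := by
  have h := Complex.betaIntegral_convergent (u := a) (v := b) (by simpa) (by simpa)
  rw [intervalIntegrable_iff_integrableOn_Ioc_of_le zero_le_one] at h
  refine IntegrableOn.congr_fun h.re (fun u hu ↦ ?_) measurableSet_Ioc
  simp only [← ofReal_betaWeight a b hu]
  exact Complex.ofReal_re _

lemma integral_betaWeight {a b : ℝ} (ha : 0 < a) (hb : 0 < b) :
    ∫ u in Ioc 0 1, betaWeight a b u = ProbabilityTheory.beta a b := by
  have h : Complex.betaIntegral a b = ((∫ u in Ioc 0 1, betaWeight a b u : ℝ) : ℂ) := by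
    rw [Complex.betaIntegral, intervalIntegral.integral_of_le zero_le_one, ← integral_complex_ofReal]
    exact setIntegral_congr_fun measurableSet_Ioc fun u hu ↦ (ofReal_betaWeight a b hu).symm
  rw [ProbabilityTheory.beta_eq_betaIntegralReal a b ha hb, h, Complex.ofReal_re]

lemma Gamma_nat_add_half_mul (n : ℕ) :
    Gamma (n + 1 / 2) * (4 ^ n * n.factorial) = (2 * n).factorial * Gamma (1 / 2) := by
  induction n with
  | zero => simp
  | succ n ih =>
    have h : ((n + 1 : ℕ) : ℝ) + 1 / 2 = (n + 1 / 2) + 1 := by push_cast; ring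
    rw [h, Gamma_add_one (by positivity), Nat.mul_succ, Nat.factorial_succ, Nat.factorial_succ,
      Nat.factorial_succ]
    push_cast
    linear_combination (2 * (n : ℝ) + 2) * (2 * n + 1) * ih

lemma integrableOn_mul_betaWeight {a b : ℝ} (ha : 0 < a) (hb : 0 < b) {f : ℝ → ℝ}
    (hf : Continuous f) : IntegrableOn (fun u ↦ f u * betaWeight a b u) (Ioc 0 1) := by
  have h : IntegrableOn (betaWeight a b) (Icc 0 1) :=
    (integrableOn_Icc_iff_integrableOn_Ioc).2 (integrableOn_betaWeight ha hb)
  exact (h.continuousOn_mul hf.continuousOn isCompact_Icc).mono_set Ioc_subset_Icc_self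

/-- Poisson's integral formula, after the substitution `u = t ^ 2`. -/
lemma besselNorm_mul_beta {α : ℝ} (hα : -(1 / 2 : ℝ) < α) (s : ℝ) :
    besselNorm α s * ProbabilityTheory.beta (1 / 2) (α + 1 / 2) =
      ∫ u in Ioc 0 1, cos (s * √u) * betaWeight (1 / 2) (α + 1 / 2) u := by
  have hb : 0 < α + 1 / 2 := by linarith
  set w := betaWeight (1 / 2) (α + 1 / 2) with hw
  have hwint : IntegrableOn w (Ioc 0 1) := integrableOn_betaWeight (by norm_num) hb
  let c : ℕ → ℝ := fun n ↦ (-1) ^ n * s ^ (2 * n) / (2 * n).factorial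
  have hcosh : Summable fun n : ℕ ↦ |s| ^ (2 * n) / ((2 * n).factorial : ℝ) :=
    (hasSum_cosh |s|).summable
  have key : HasSum (fun n ↦ ∫ u in Ioc 0 1, c n * (u ^ n * w u))
      (∫ u in Ioc 0 1, cos (s * √u) * w u) := by
    refine hasSum_integral_of_dominated_convergence
      (fun n u ↦ |s| ^ (2 * n) / (2 * n).factorial * w u) (fun n ↦ ?_) (fun n ↦ ?_) ?_ ?_ ?_
    · exact ((integrableOn_mul_betaWeight (by norm_num) hb
        (continuous_pow n)).const_mul _).aestronglyMeasurable
    · refine ae_restrict_of_forall_mem measurableSet_Ioc fun u hu ↦ ?_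
      have hwu := betaWeight_nonneg (1 / 2) (α + 1 / 2) hu
      simp only [c, norm_mul, norm_div, norm_pow, norm_neg, norm_one, one_pow, one_mul,
        Real.norm_eq_abs, Nat.abs_cast, abs_of_nonneg hwu, abs_of_pos hu.1, hw]
      gcongr
      exact mul_le_of_le_one_left hwu (pow_le_one₀ hu.1.le hu.2)
    · exact ae_of_all _ fun u ↦ hcosh.mul_right _
    · simp_rw [tsum_mul_right]
      exact hwint.const_mul _
    · refine ae_restrict_of_forall_mem measurableSet_Ioc fun u hu ↦ ?_
      refine ((hasSum_cos (s * √u)).mul_right (w u)).congr_fun ?_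
      intro n
      rw [mul_pow, pow_mul (√u), sq_sqrt hu.1.le]
      ring
  rw [besselNorm, ← key.tsum_eq, mul_comm, ← mul_assoc, ← tsum_mul_left]
  refine tsum_congr fun n ↦ ?_
  have hmoment : ∫ u in Ioc 0 1, u ^ n * w u =
      ProbabilityTheory.beta (n + 1 / 2) (α + 1 / 2) := by
    rw [← integral_betaWeight (by positivity) hb]
    exact setIntegral_congr_fun measurableSet_Ioc fun u hu ↦ pow_mul_betaWeight _ _ n hu.1
  rw [integral_const_mul, hmoment, ProbabilityTheory.beta, ProbabilityTheory.beta,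
    show (1 / 2 : ℝ) + (α + 1 / 2) = α + 1 by ring,
    show (n : ℝ) + 1 / 2 + (α + 1 / 2) = n + α + 1 by ring]
  have h1 : Gamma (α + 1) ≠ 0 := (Gamma_pos_of_pos (by linarith)).ne'
  have h2 : Gamma (n + α + 1) ≠ 0 :=
    (Gamma_pos_of_pos (by linarith [(Nat.cast_nonneg n : (0 : ℝ) ≤ n)])).ne'
  have h3 := Gamma_nat_add_half_mul n
  have h4 : (s / 2) ^ (2 * n) = s ^ (2 * n) / 4 ^ n := by
    rw [div_pow, pow_mul 2]; norm_num
  have h5 : (n.factorial : ℝ) ≠ 0 := by positivity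
  have h6 : ((2 * n).factorial : ℝ) ≠ 0 := by positivity
  have h7 : Gamma (n + 1 / 2) = (2 * n).factorial * Gamma (1 / 2) / (4 ^ n * n.factorial) := by
    rw [← h3]; field_simp
  rw [h4, h7]
  simp only [c]
  generalize Gamma (1 / 2) = x
  field_simp

lemma one_sub_besselNorm_mul_beta {α : ℝ} (hα : -(1 / 2 : ℝ) < α) (s : ℝ) :
    (1 - besselNorm α s) * ProbabilityTheory.beta (1 / 2) (α + 1 / 2) =
      ∫ u in Ioc 0 1, (1 - cos (s * √u)) * betaWeight (1 / 2) (α + 1 / 2) u := by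
  have hb : 0 < α + 1 / 2 := by linarith
  simp_rw [sub_mul, one_mul]
  rw [besselNorm_mul_beta hα, integral_sub (integrableOn_betaWeight (by norm_num) hb)
    (integrableOn_mul_betaWeight (by norm_num) hb (by fun_prop)),
    integral_betaWeight (by norm_num) hb]

lemma integral_one_sub_cos_le {b : ℝ} (hb : 0 < b) (s : ℝ) :
    ∫ u in Ioc 0 1, (1 - cos (s * √u)) * betaWeight (1 / 2) b u ≤
      2 * min 1 (s ^ 2) * ProbabilityTheory.beta (1 / 2) b := by
  rw [← integral_betaWeight (by norm_num) hb, ← integral_const_mul]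
  refine setIntegral_mono_on (integrableOn_mul_betaWeight (by norm_num) hb (by fun_prop))
    ((integrableOn_betaWeight (by norm_num) hb).const_mul _) measurableSet_Ioc fun u hu ↦ ?_
  refine mul_le_mul_of_nonneg_right ?_ (betaWeight_nonneg _ _ hu)
  rw [mul_min_of_nonneg _ _ zero_le_two]
  refine le_min (by linarith [neg_one_le_cos (s * √u)]) ?_
  have h := one_sub_sq_div_two_le_cos (x := s * √u)
  rw [mul_pow, sq_sqrt hu.1.le] at h
  nlinarith [sq_nonneg s, mul_le_mul_of_nonneg_left hu.2 (sq_nonneg s)]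

lemma le_integral_one_sub_cos_of_abs_le {b : ℝ} (hb : 0 < b) {s : ℝ} (hs : |s| ≤ π) :
    2 / π ^ 2 * ProbabilityTheory.beta (1 + 1 / 2) b * s ^ 2 ≤
      ∫ u in Ioc 0 1, (1 - cos (s * √u)) * betaWeight (1 / 2) b u := by
  rw [mul_right_comm, ← integral_betaWeight (by norm_num) hb, ← integral_const_mul]
  refine setIntegral_mono_on ((integrableOn_betaWeight (by norm_num) hb).const_mul _)
    (integrableOn_mul_betaWeight (by norm_num) hb (by fun_prop)) measurableSet_Ioc fun u hu ↦ ?_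
  have h := pow_mul_betaWeight (1 / 2) b 1 hu.1
  rw [Nat.cast_one, pow_one] at h
  rw [← h, ← mul_assoc]
  refine mul_le_mul_of_nonneg_right ?_ (betaWeight_nonneg _ _ hu)
  have habs : |s * √u| ≤ π := by
    rw [abs_mul, abs_of_nonneg (sqrt_nonneg u)]
    exact (mul_le_of_le_one_right (abs_nonneg s) (sqrt_le_one.2 hu.2)).trans hs
  have h' := cos_le_one_sub_mul_cos_sq habs
  rw [mul_pow, sq_sqrt hu.1.le] at h'
  linarith

lemma le_integral_one_sub_cos_of_le_abs {b : ℝ} (hb : 0 < b) {s : ℝ} (hs : π ≤ |s|) :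
    (3 / 4 : ℝ) ^ b * (1 - 2 / π) ≤
      ∫ u in Ioc 0 1, (1 - cos (s * √u)) * betaWeight (1 / 2) b u := by
  have hs0 : s ≠ 0 := abs_pos.1 (pi_pos.trans_le hs)
  have hint := integrableOn_mul_betaWeight (a := 1 / 2) (by norm_num) hb
    (f := fun u ↦ 1 - cos (s * √u)) (by fun_prop)
  have hsub : Ioc (0 : ℝ) (1 / 4) ⊆ Ioc 0 1 := Ioc_subset_Ioc_right (by norm_num)
  set m : ℝ := (3 / 4) ^ b
  have hm : 0 < m := by positivity
  have hftc := intervalIntegral.sub_le_integral_of_hasDeriv_right_of_le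
    (g := fun u ↦ 2 * m * (√u - sin (s * √u) / s))
    (g' := fun u ↦ m * ((1 - cos (s * √u)) / √u))
    (φ := fun u ↦ (1 - cos (s * √u)) * betaWeight (1 / 2) b u)
    (a := 0) (b := 1 / 4) (by norm_num) (by fun_prop) (fun u hu ↦ ?_)
    ((integrableOn_Icc_iff_integrableOn_Ioc).2 (hint.mono_set hsub)) (fun u hu ↦ ?_)
  · rw [intervalIntegral.integral_of_le (by norm_num)] at hftc
    have hmono := setIntegral_mono_set hint
      (ae_restrict_of_forall_mem measurableSet_Ioc fun u hu ↦
        mul_nonneg (sub_nonneg.2 (cos_le_one _)) (betaWeight_nonneg (1 / 2) b hu))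
      hsub.eventuallyLE
    refine le_trans ?_ (hftc.trans hmono)
    have hsin : sin (s * (1 / 2)) / s ≤ 1 / π := by
      refine (le_abs_self _).trans ?_
      rw [abs_div]
      exact div_le_div₀ zero_le_one (abs_sin_le_one _) pi_pos hs
    have hsqrt : √(1 / 4 : ℝ) = 1 / 2 := by
      rw [show (1 / 4 : ℝ) = (1 / 2) ^ 2 by norm_num, sqrt_sq (by norm_num)]
    simp only [hsqrt, sqrt_zero, mul_zero, sin_zero, zero_div, sub_zero]
    have := mul_le_mul_of_nonneg_left hsin hm.le
    rw [show (2 : ℝ) / π = 2 * (1 / π) by ring]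
    linarith
  · have hsq := hasDerivAt_sqrt hu.1.ne'
    have hd := ((hsq.sub (((hsq.const_mul s).sin).div_const s)).const_mul (2 * m))
    refine (hd.congr_deriv ?_).hasDerivWithinAt
    have : √u ≠ 0 := (sqrt_pos.2 hu.1).ne'
    field_simp
  · have hu1 : 0 < 1 - u := by linarith [hu.2]
    have hle : m ≤ (1 - u) ^ (b - 1) :=
      (rpow_le_rpow (by norm_num) (by linarith [hu.2]) hb.le).trans
        (rpow_le_rpow_of_exponent_ge hu1 (by linarith [hu.1]) (by linarith))
    have hrpow : u ^ ((1 / 2 : ℝ) - 1) = (√u)⁻¹ := by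
      rw [sqrt_eq_rpow, ← rpow_neg hu.1.le]; norm_num
    have hnn : 0 ≤ (1 - cos (s * √u)) / √u :=
      div_nonneg (sub_nonneg.2 (cos_le_one _)) (sqrt_nonneg u)
    calc m * ((1 - cos (s * √u)) / √u)
        ≤ (1 - u) ^ (b - 1) * ((1 - cos (s * √u)) / √u) := by gcongr
      _ = (1 - cos (s * √u)) * betaWeight (1 / 2) b u := by
        rw [betaWeight, hrpow]; ring

end BesselNorm

open BesselNorm in
/-- For `α > -1/2` there are positive constants `c₁, c₂` such that for all `t, λ ∈ ℝ`,
`c₁ · min{1, (λt)²} ≤ 1 − j_α(λt) ≤ c₂ · min{1, (λt)²}`. -/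
theorem bessel_one_sub_bounds (α : ℝ) (hα : -(1 / 2 : ℝ) < α) :
    ∃ c₁ > (0 : ℝ), ∃ c₂ > (0 : ℝ), ∀ t lam : ℝ,
      c₁ * min 1 ((lam * t) ^ 2) ≤ 1 - besselNorm α (lam * t) ∧
      1 - besselNorm α (lam * t) ≤ c₂ * min 1 ((lam * t) ^ 2) := by
  have hb : 0 < α + 1 / 2 := by linarith
  have hB : 0 < ProbabilityTheory.beta (1 / 2) (α + 1 / 2) :=
    ProbabilityTheory.beta_pos (by norm_num) hb
  have hE : 0 < ProbabilityTheory.beta (1 + 1 / 2) (α + 1 / 2) :=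
    ProbabilityTheory.beta_pos (by norm_num) hb
  set B := ProbabilityTheory.beta (1 / 2) (α + 1 / 2)
  set k₁ := 2 / π ^ 2 * ProbabilityTheory.beta (1 + 1 / 2) (α + 1 / 2)
  set k₂ := (3 / 4 : ℝ) ^ (α + 1 / 2) * (1 - 2 / π)
  have hk₁ : 0 < k₁ := by positivity
  have hk₂ : 0 < k₂ := by
    refine mul_pos (by positivity) (sub_pos.2 ((div_lt_one pi_pos).2 ?_))
    linarith [pi_gt_three]
  have hk : 0 < min k₁ k₂ := lt_min hk₁ hk₂
  refine ⟨min k₁ k₂ / B, div_pos hk hB, 2, two_pos, fun t lam ↦ ?_⟩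
  generalize lam * t = s
  have hI := one_sub_besselNorm_mul_beta hα s
  refine ⟨?_, le_of_mul_le_mul_right (hI.trans_le (integral_one_sub_cos_le hb s)) hB⟩
  rw [div_mul_eq_mul_div, div_le_iff₀ hB, hI]
  rcases le_total |s| π with hs | hs
  · refine le_trans ?_ (le_integral_one_sub_cos_of_abs_le hb hs)
    exact mul_le_mul (min_le_left _ _) (min_le_right _ _) (by positivity) hk₁.le
  · refine le_trans ?_ (le_integral_one_sub_cos_of_le_abs hb hs)
    exact (mul_le_of_le_one_right hk.le (min_le_left _ _)).trans (min_le_right _ _)
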